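/- HGNOs approximately solve the PDE uniformly on compacts (Theorem DGM_residual(i)): assume F : H × ℝ × H × L(H) → ℝ satisfies the Lipschitz-type estimate and the sequential continuity assumption, and let v be a classical solution of the PDE ⟨L Dv(x), x⟩ + F(x, v(x), Dv(x), D²v(x)) = 0 on H. Let K, K' ⊆ H be compact and assume the consistency condition sup_{x∈K} |⟨L(Dv(x) − P_d Dv(P_d x)), x⟩| → 0 as d → ∞. Then for every ε > 0 there exist d ∈ ℕ and f ∈ 𝒩_d such that the cylindrical function w_f satisfies sup_{x∈K} |v − w_f| < ε, sup_{x∈K} ‖Dv − Dw_f‖ < ε, sup_{x∈K,h∈K'} ‖(D²v(x) − D²w_f(x)) h‖ < ε, sup_{x∈K} |⟨L(Dv(x) − Dw_f(x)), x⟩| < ε, and the PDE residual bound sup_{x∈K} |⟨L Dw_f(x), x⟩ + F(x, w_f(x), Dw_f(x), D²w_f(x))| < ε. -/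

import Mathlib

open Filter Topology
open scoped RealInnerProductSpace

/-- The coordinate map `x ↦ (⟪e 0, x⟫, …, ⟪e (d-1), x⟫)` of a Hilbert space with respect to the
first `d` elements of a sequence `e`. -/
noncomputable def euclCoord {H : Type*} [NormedAddCommGroup H] [InnerProductSpace ℝ H]
    (e : ℕ → H) (d : ℕ) (x : H) : EuclideanSpace ℝ (Fin d) :=
  WithLp.toLp 2 fun i : Fin d => ⟪e i, x⟫

/-- The cylindrical function (Hilbert–Galerkin Neural Operator) with inner network `f`. -/
noncomputable def cyl {H : Type*} [NormedAddCommGroup H] [InnerProductSpace ℝ H]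
    (e : ℕ → H) {d : ℕ} (f : EuclideanSpace ℝ (Fin d) → ℝ) (x : H) : ℝ :=
  f (euclCoord e d x)

lemma unif_of_local {X : Type*} [TopologicalSpace X] {K : Set X} (hK : IsCompact K)
    (Q : ℕ → X → Prop)
    (h : ∀ x ∈ K, ∀ᶠ p in (atTop : Filter ℕ) ×ˢ 𝓝[K] x, Q p.1 p.2) :
    ∀ᶠ d in atTop, ∀ x ∈ K, Q d x := by
  have := hK.induction_on (p := fun s => ∀ᶠ d in (atTop : Filter ℕ), ∀ x ∈ s, Q d x)
    (by simp) (fun s t hst ht => ht.mono fun d hd x hx => hd x (hst hx))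
    (fun s t hs ht => by
      filter_upwards [hs, ht] with d h1 h2 x hx
      exact hx.elim (h1 x) (h2 x))
    (fun x hx => by
      obtain ⟨pa, ha, pb, hb, hab⟩ := eventually_prod_iff.1 (h x hx)
      exact ⟨{y | pb y}, hb, ha.mono fun d hd y hy => hab hd hy⟩)
  exact this

lemma contDiff_gradient {E : Type*} [NormedAddCommGroup E] [InnerProductSpace ℝ E]
    [CompleteSpace E] {f : E → ℝ} (hf : ContDiff ℝ 2 f) : ContDiff ℝ 1 (gradient f) := by
  have h1 : ContDiff ℝ 1 (fderiv ℝ f) := hf.fderiv_right (by norm_num)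
  exact ((InnerProductSpace.toDual ℝ E).symm.toContinuousLinearEquiv.contDiff).comp h1

lemma gradient_comp_clm {E G : Type*} [NormedAddCommGroup E] [InnerProductSpace ℝ E]
    [CompleteSpace E] [NormedAddCommGroup G] [InnerProductSpace ℝ G] [CompleteSpace G]
    (A : E →L[ℝ] G) {f : G → ℝ} (hf : ContDiff ℝ 2 f) :
    gradient (fun x => f (A x)) = fun x => A.adjoint (gradient f (A x)) := by
  funext x
  apply HasGradientAt.gradient
  have hd : HasGradientAt f (gradient f (A x)) (A x) :=
    ((hf.differentiable (by norm_num)) (A x)).hasGradientAt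
  have h2 := hd.hasFDerivAt.comp x A.hasFDerivAt
  rw [hasGradientAt_iff_hasFDerivAt]
  have h3 : (InnerProductSpace.toDual ℝ E) (A.adjoint (gradient f (A x)))
      = ((InnerProductSpace.toDual ℝ G) (gradient f (A x))).comp A := by
    ext z
    simp [ContinuousLinearMap.adjoint_inner_left]
  rw [h3]
  exact h2

lemma hess_comp_clm {E G : Type*} [NormedAddCommGroup E] [InnerProductSpace ℝ E]
    [CompleteSpace E] [NormedAddCommGroup G] [InnerProductSpace ℝ G] [CompleteSpace G]
    (A : E →L[ℝ] G) {f : G → ℝ} (hf : ContDiff ℝ 2 f) (x h : E) :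
    fderiv ℝ (gradient (fun x => f (A x))) x h
      = A.adjoint (fderiv ℝ (gradient f) (A x) (A h)) := by
  rw [gradient_comp_clm A hf]
  have hd : HasFDerivAt (gradient f) (fderiv ℝ (gradient f) (A x)) (A x) :=
    (((contDiff_gradient hf).differentiable (by norm_num)) (A x)).hasFDerivAt
  have := (A.adjoint.hasFDerivAt (x := gradient f (A x))).comp x (hd.comp x A.hasFDerivAt)
  have h3 := this.fderiv
  have : fderiv ℝ (fun x => A.adjoint (gradient f (A x))) x = _ := h3
  rw [this]; rfl

lemma tendsto_clm_app {E α : Type*} [NormedAddCommGroup E] [NormedSpace ℝ E]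
    {l : Filter α} {T : α → E →L[ℝ] E} {z : α → E} {S : E →L[ℝ] E} {h : E}
    (hT : Tendsto T l (𝓝 S)) (hz : Tendsto z l (𝓝 h)) :
    Tendsto (fun i => T i (z i)) l (𝓝 (S h)) :=
  ((isBoundedBilinearMap_apply (𝕜 := ℝ) (E := E) (F := E)).continuous.tendsto (S, h)).comp
    (hT.prodMk_nhds hz)

/-- the coordinate map as a continuous linear map -/
noncomputable def piL {H : Type*} [NormedAddCommGroup H] [InnerProductSpace ℝ H]
    (e : ℕ → H) (d : ℕ) : H →L[ℝ] EuclideanSpace ℝ (Fin d) :=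
  ((PiLp.continuousLinearEquiv 2 ℝ (fun _ : Fin d => ℝ)).symm :
    (Fin d → ℝ) →L[ℝ] EuclideanSpace ℝ (Fin d)).comp
    (ContinuousLinearMap.pi fun i : Fin d => innerSL ℝ (e i))

lemma piL_apply {H : Type*} [NormedAddCommGroup H] [InnerProductSpace ℝ H]
    (e : ℕ → H) (d : ℕ) (x : H) : piL e d x = euclCoord e d x := rfl

lemma adj_piL {H : Type*} [NormedAddCommGroup H] [InnerProductSpace ℝ H] [CompleteSpace H]
    (e : ℕ → H) (d : ℕ) (x : H) :
    (piL e d).adjoint (piL e d x) = ∑ i ∈ Finset.range d, ⟪e i, x⟫ • e i := by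
  apply ext_inner_left ℝ
  intro z
  rw [ContinuousLinearMap.adjoint_inner_right, piL_apply, piL_apply, inner_sum,
    Finset.sum_range, PiLp.inner_apply]
  apply Finset.sum_congr rfl
  intro i _
  simp [euclCoord, inner_smul_right, real_inner_comm]

lemma tendsto_P {H : Type*} [NormedAddCommGroup H] [InnerProductSpace ℝ H] [CompleteSpace H]
    (e : ℕ → H) (he : Orthonormal ℝ e)
    (htot : Dense ((Submodule.span ℝ (Set.range e) : Submodule ℝ H) : Set H))
    (P : ℕ → H → H)
    (hP : ∀ (d : ℕ) (x : H), P d x = ∑ i ∈ Finset.range d, ⟪e i, x⟫ • e i)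
    {α : Type*} {l : Filter α} {a : α → ℕ} {y : α → H} {x : H}
    (ha : Tendsto a l atTop) (hy : Tendsto y l (𝓝 x)) :
    Tendsto (fun i => P (a i) (y i)) l (𝓝 x) := by
  have hbd : ∀ d z, ‖P d z‖ ≤ ‖z‖ := by
    intro d z
    have h1 := he.sum_inner_products_le z (s := Finset.range d)
    have h2 : ‖P d z‖ ^ 2 = ∑ i ∈ Finset.range d, ‖⟪e i, z⟫‖ ^ 2 := by
      rw [← real_inner_self_eq_norm_sq, hP, he.inner_sum]
      exact Finset.sum_congr rfl fun i _ => by simp [sq]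
    rw [← h2] at h1
    exact (sq_le_sq₀ (norm_nonneg _) (norm_nonneg _)).1 h1
  have h1 : Tendsto (fun d => P d x) atTop (𝓝 x) := by
    let b := HilbertBasis.mk he
      (by rw [Submodule.dense_iff_topologicalClosure_eq_top.1 htot])
    have hb := (b.hasSum_repr x).tendsto_sum_nat
    simpa [b, HilbertBasis.repr_apply_apply, hP] using hb
  have h2 : Tendsto (fun i => P (a i) (y i - x)) l (𝓝 0) := by
    apply squeeze_zero_norm (fun i => hbd _ _)
    simpa using (hy.sub_const x).norm
  have h3 := h2.add (h1.comp ha)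
  rw [zero_add] at h3
  refine h3.congr fun i => ?_
  simp only [Function.comp, hP, ← Finset.sum_add_distrib, ← add_smul, ← inner_add_right,
    sub_add_cancel]

/-- HGNOs approximately solve the PDE
`⟪L Dv(x), x⟫ + F(x, v(x), Dv(x), D²v(x)) = 0` uniformly on compacts
(Theorem DGM_residual(i)). -/
theorem hgno_solves_pde_on_compacts
    {H : Type*} [NormedAddCommGroup H] [InnerProductSpace ℝ H] [CompleteSpace H]
    (e : ℕ → H) (he : Orthonormal ℝ e)
    (htot : Dense ((Submodule.span ℝ (Set.range e) : Submodule ℝ H) : Set H))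
    (P : ℕ → H → H)
    (hP : ∀ (d : ℕ) (x : H), P d x = ∑ i ∈ Finset.range d, ⟪e i, x⟫ • e i)
    (N : ∀ d : ℕ, Set (EuclideanSpace ℝ (Fin d) → ℝ))
    (hNsmooth : ∀ d : ℕ, ∀ f ∈ N d, ContDiff ℝ 2 f)
    (hNdense : ∀ (d : ℕ) (h : EuclideanSpace ℝ (Fin d) → ℝ), ContDiff ℝ 2 h →
      ∀ K : Set (EuclideanSpace ℝ (Fin d)), IsCompact K → ∀ ε > 0,
      ∃ f ∈ N d,
        (∀ y ∈ K, |h y - f y| < ε) ∧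
        (∀ y ∈ K, ‖gradient h y - gradient f y‖ < ε) ∧
        (∀ y ∈ K, ‖fderiv ℝ (gradient h) y - fderiv ℝ (gradient f) y‖ < ε))
    (L : H →ₗ[ℝ] H) (Ldom : Submodule ℝ H)
    (hLdense : Dense (Ldom : Set H))
    (hLclosed : IsClosed {p : H × H | p.1 ∈ Ldom ∧ p.2 = L p.1})
    (heL : ∀ i : ℕ, e i ∈ Ldom)
    (F : H → ℝ → H → (H →L[ℝ] H) → ℝ)
    (hFcont : Continuous fun w : H × ℝ × H × (H →L[ℝ] H) => F w.1 w.2.1 w.2.2.1 w.2.2.2)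
    (C k : ℝ) (hC : 0 < C) (hk : 0 ≤ k)
    (hLip : ∀ (x : H) (r s : ℝ) (p q : H) (Z Y : H →L[ℝ] H),
      |F x r p Z - F x s q Y| ≤ C * (|r - s| + ‖p - q‖ + ‖Z - Y‖) * (1 + ‖x‖ ^ k))
    (hFseq : ∀ (xn : ℕ → H) (x : H) (rn : ℕ → ℝ) (r : ℝ) (pn : ℕ → H) (p : H)
        (Yn : ℕ → H →L[ℝ] H) (Y : H →L[ℝ] H),
        Tendsto xn atTop (𝓝 x) → Tendsto rn atTop (𝓝 r) → Tendsto pn atTop (𝓝 p) →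
        (∀ h : H, Tendsto (fun n => Yn n h) atTop (𝓝 (Y h))) →
        Tendsto (fun n => F (xn n) (rn n) (pn n) (Yn n)) atTop (𝓝 (F x r p Y)))
    (v : H → ℝ) (hv : ContDiff ℝ 2 v)
    (hDvdom : ∀ x : H, gradient v x ∈ Ldom)
    (hLDv : Continuous fun x : H => L (gradient v x))
    (hPDE : ∀ x : H,
      ⟪L (gradient v x), x⟫ + F x (v x) (gradient v x) (fderiv ℝ (gradient v) x) = 0)
    (K K' : Set H) (hK : IsCompact K) (hK' : IsCompact K')
    (hcons : ∀ ε > 0, ∃ D : ℕ, ∀ d ≥ D, ∀ x ∈ K,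
      |⟪L (gradient v x - P d (gradient v (P d x))), x⟫| < ε)
    (ε : ℝ) (hε : 0 < ε) :
    ∃ (d : ℕ) (f : EuclideanSpace ℝ (Fin d) → ℝ), f ∈ N d ∧
      (∀ x ∈ K, |v x - cyl e f x| < ε) ∧
      (∀ x ∈ K, ‖gradient v x - gradient (cyl e f) x‖ < ε) ∧
      (∀ x ∈ K, ∀ h ∈ K',
        ‖fderiv ℝ (gradient v) x h - fderiv ℝ (gradient (cyl e f)) x h‖ < ε) ∧
      (∀ x ∈ K, |⟪L (gradient v x - gradient (cyl e f) x), x⟫| < ε) ∧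
      (∀ x ∈ K,
        |⟪L (gradient (cyl e f) x), x⟫ +
          F x (cyl e f x) (gradient (cyl e f) x) (fderiv ℝ (gradient (cyl e f)) x)| < ε) := by
  have hadj : ∀ d x, (piL e d).adjoint (piL e d x) = P d x := fun d x => by rw [adj_piL, hP]
  -- the finite-dimensional restriction of L
  have hM : ∀ d : ℕ, ∃ M : ℝ, 0 ≤ M ∧ ∀ w : EuclideanSpace ℝ (Fin d),
      ‖L ((piL e d).adjoint w)‖ ≤ M * ‖w‖ := by
    intro d
    let T : EuclideanSpace ℝ (Fin d) →L[ℝ] H :=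
      LinearMap.toContinuousLinearMap (L ∘ₗ ((piL e d).adjoint : EuclideanSpace ℝ (Fin d) →ₗ[ℝ] H))
    exact ⟨‖T‖, norm_nonneg _, fun w => T.le_opNorm w⟩
  choose M hM0 hM using hM
  let B : ℕ → ℝ := fun d => 1 + ‖(piL e d).adjoint‖ + ‖(piL e d).adjoint‖ * ‖piL e d‖ + M d
  have hB : ∀ d, 1 ≤ B d := by
    intro d
    have := hM0 d
    have : 0 ≤ ‖(piL e d).adjoint‖ + ‖(piL e d).adjoint‖ * ‖piL e d‖ := by positivity
    simp only [B]; linarith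
  let δ : ℕ → ℝ := fun d => 1 / ((d : ℝ) + 1)
  have hδ0 : ∀ d, 0 < δ d := fun d => by positivity
  have hδ : Tendsto δ atTop (𝓝 0) := tendsto_one_div_add_atTop_nhds_zero_nat
  have hsm : ∀ d, ContDiff ℝ 2 (fun y => v ((piL e d).adjoint y)) := fun d =>
    hv.comp (piL e d).adjoint.contDiff
  have hap := fun d => hNdense d _ (hsm d) (piL e d '' K) (hK.image (piL e d).continuous)
    (δ d / B d) (div_pos (hδ0 d) (by linarith [hB d]))
  choose f hfN hf0 hf1 hf2 using hap
  have hfs : ∀ d, ContDiff ℝ 2 (f d) := fun d => hNsmooth d _ (hfN d)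
  have hcyl : ∀ d, cyl e (f d) = fun x => f d (piL e d x) := fun d => rfl
  have hg : ∀ d x, gradient (cyl e (f d)) x = (piL e d).adjoint (gradient (f d) (piL e d x)) := by
    intro d x; rw [hcyl, gradient_comp_clm _ (hfs d)]
  have hh : ∀ d x h, fderiv ℝ (gradient (cyl e (f d))) x h
      = (piL e d).adjoint (fderiv ℝ (gradient (f d)) (piL e d x) (piL e d h)) := by
    intro d x h; rw [hcyl, hess_comp_clm _ (hfs d)]
  have hscale : ∀ d (c t : ℝ), 0 ≤ c → c ≤ B d → t < δ d / B d → c * t ≤ δ d := by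
    intro d c t hc hcB ht
    have hBd := hB d
    have hpos : 0 < δ d / B d := div_pos (hδ0 d) (by linarith)
    calc c * t ≤ c * (δ d / B d) := by gcongr
      _ ≤ B d * (δ d / B d) := by gcongr
      _ = δ d := by field_simp
  have hBadj : ∀ d, ‖(piL e d).adjoint‖ ≤ B d := fun d => by
    have := hM0 d
    have : 0 ≤ ‖(piL e d).adjoint‖ * ‖piL e d‖ := by positivity
    simp only [B]; linarith
  have hBadj2 : ∀ d, ‖(piL e d).adjoint‖ * ‖piL e d‖ ≤ B d := fun d => by
    have := hM0 d
    have : 0 ≤ ‖(piL e d).adjoint‖ := by positivity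
    simp only [B]; linarith
  have hBM : ∀ d, M d ≤ B d := fun d => by
    have : 0 ≤ ‖(piL e d).adjoint‖ + ‖(piL e d).adjoint‖ * ‖piL e d‖ := by positivity
    simp only [B]; linarith
  -- approximation errors
  have e0 : ∀ d, ∀ x ∈ K, ‖cyl e (f d) x - v (P d x)‖ ≤ δ d := by
    intro d x hx
    have h1 := hf0 d _ (Set.mem_image_of_mem _ hx)
    have h2 := hscale d 1 _ zero_le_one (hB d) h1
    rw [one_mul, hadj] at h2
    rw [norm_sub_rev]
    exact h2
  have ghe : ∀ d x, gradient (fun y => v ((piL e d).adjoint y)) (piL e d x)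
      = piL e d (gradient v (P d x)) := by
    intro d x
    rw [gradient_comp_clm _ hv, ContinuousLinearMap.adjoint_adjoint]
    simp only [hadj]
  have e1 : ∀ d, ∀ x ∈ K, ‖gradient (cyl e (f d)) x - P d (gradient v (P d x))‖ ≤ δ d := by
    intro d x hx
    have h1 := hf1 d _ (Set.mem_image_of_mem _ hx)
    have h2 := hscale d _ _ (norm_nonneg _) (hBadj d) h1
    rw [ghe] at h2
    rw [norm_sub_rev, hg, ← hadj d (gradient v (P d x)), ← map_sub]
    exact (ContinuousLinearMap.le_opNorm _ _).trans h2
  have eL : ∀ d, ∀ x ∈ K, ‖L (P d (gradient v (P d x)) - gradient (cyl e (f d)) x)‖ ≤ δ d := by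
    intro d x hx
    have h1 := hf1 d _ (Set.mem_image_of_mem _ hx)
    have h2 := hscale d _ _ (hM0 d) (hBM d) h1
    rw [ghe] at h2
    rw [hg, ← hadj d (gradient v (P d x)), ← map_sub]
    exact (hM _ _).trans h2
  have e2 : ∀ d, ∀ x ∈ K, ∀ h, ‖fderiv ℝ (gradient (cyl e (f d))) x h
      - P d (fderiv ℝ (gradient v) (P d x) (P d h))‖ ≤ δ d * ‖h‖ := by
    intro d x hx h
    have h1 := hf2 d _ (Set.mem_image_of_mem _ hx)
    have h2 := hscale d _ _ (by positivity) (hBadj2 d) h1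
    have h3 : fderiv ℝ (gradient (fun y => v ((piL e d).adjoint y))) (piL e d x) (piL e d h)
      = piL e d (fderiv ℝ (gradient v) (P d x) (P d h)) := by
      rw [hess_comp_clm _ hv, ContinuousLinearMap.adjoint_adjoint]
      simp only [hadj]
    rw [norm_sub_rev, hh, ← hadj d (fderiv ℝ (gradient v) (P d x) (P d h)), ← map_sub, ← h3,
      ← sub_apply]
    refine (ContinuousLinearMap.le_opNorm _ _).trans ?_
    refine le_trans ?_ (mul_le_mul_of_nonneg_right h2 (norm_nonneg h))
    set Z := fderiv ℝ (gradient (fun y => v ((piL e d).adjoint y))) (piL e d x)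
      - fderiv ℝ (gradient (f d)) (piL e d x)
    calc ‖(piL e d).adjoint‖ * ‖Z (piL e d h)‖
        ≤ ‖(piL e d).adjoint‖ * (‖Z‖ * (‖piL e d‖ * ‖h‖)) := by
          gcongr
          exact (Z.le_opNorm _).trans (by gcongr; exact ContinuousLinearMap.le_opNorm _ _)
      _ = _ := by ring
  -- continuity facts
  have cv : Continuous v := hv.continuous
  have cg : Continuous (gradient v) := (contDiff_gradient hv).continuous
  have ch : Continuous (fderiv ℝ (gradient v)) :=
    (contDiff_gradient hv).continuous_fderiv (by norm_num)
  -- convergence along filters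
  have t0 : ∀ {α : Type _} {l : Filter α} {a : α → ℕ} {y : α → H} {x : H},
      Tendsto a l atTop → Tendsto y l (𝓝 x) → (∀ᶠ i in l, y i ∈ K) →
      Tendsto (fun i => cyl e (f (a i)) (y i)) l (𝓝 (v x)) := by
    intro α l a y x ha hy hyK
    have h1 := (cv.tendsto x).comp (tendsto_P e he htot P hP ha hy)
    have h2 : Tendsto (fun i => cyl e (f (a i)) (y i) - v (P (a i) (y i))) l (𝓝 0) :=
      squeeze_zero_norm' (hyK.mono fun i hi => e0 _ _ hi) (hδ.comp ha)
    simpa using h2.add h1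
  have t1 : ∀ {α : Type _} {l : Filter α} {a : α → ℕ} {y : α → H} {x : H},
      Tendsto a l atTop → Tendsto y l (𝓝 x) → (∀ᶠ i in l, y i ∈ K) →
      Tendsto (fun i => gradient (cyl e (f (a i))) (y i)) l (𝓝 (gradient v x)) := by
    intro α l a y x ha hy hyK
    have h1 := tendsto_P e he htot P hP ha
      ((cg.tendsto x).comp (tendsto_P e he htot P hP ha hy))
    have h2 : Tendsto (fun i => gradient (cyl e (f (a i))) (y i)
        - P (a i) (gradient v (P (a i) (y i)))) l (𝓝 0) :=
      squeeze_zero_norm' (hyK.mono fun i hi => e1 _ _ hi) (hδ.comp ha)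
    simpa using h2.add h1
  have t2 : ∀ {α : Type _} {l : Filter α} {a : α → ℕ} {y : α → H} {x : H} {z : α → H} {h : H},
      Tendsto a l atTop → Tendsto y l (𝓝 x) → (∀ᶠ i in l, y i ∈ K) → Tendsto z l (𝓝 h) →
      Tendsto (fun i => fderiv ℝ (gradient (cyl e (f (a i)))) (y i) (z i)) l
        (𝓝 (fderiv ℝ (gradient v) x h)) := by
    intro α l a y x z h ha hy hyK hz
    have h1 := tendsto_P e he htot P hP ha
      (tendsto_clm_app ((ch.tendsto x).comp (tendsto_P e he htot P hP ha hy))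
        (tendsto_P e he htot P hP ha hz))
    have h2 : Tendsto (fun i => fderiv ℝ (gradient (cyl e (f (a i)))) (y i) (z i)
        - P (a i) (fderiv ℝ (gradient v) (P (a i) (y i)) (P (a i) (z i)))) l (𝓝 0) :=
      squeeze_zero_norm' (hyK.mono fun i hi => e2 _ _ hi (z i))
        (by simpa using (hδ.comp ha).mul hz.norm)
    simpa using h2.add h1
  have lK : ∀ x, Tendsto (fun p : ℕ × H => p.2) ((atTop : Filter ℕ) ×ˢ 𝓝[K] x) (𝓝 x) :=
    fun x => tendsto_nhds_of_tendsto_nhdsWithin (s := K) tendsto_snd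
  have lK2 : ∀ x, ∀ᶠ p in (atTop : Filter ℕ) ×ˢ 𝓝[K] x, p.2 ∈ K :=
    fun x => tendsto_snd.eventually self_mem_nhdsWithin
  have E0 : ∀ᶠ d in atTop, ∀ x ∈ K, |v x - cyl e (f d) x| < ε := by
    refine unif_of_local hK (fun d x => |v x - cyl e (f d) x| < ε) fun x hx => ?_
    have h := (((cv.tendsto x).comp (lK x)).sub (t0 tendsto_fst (lK x) (lK2 x))).norm
    rw [sub_self, norm_zero] at h
    exact h.eventually_lt_const hε
  have E1 : ∀ᶠ d in atTop, ∀ x ∈ K, ‖gradient v x - gradient (cyl e (f d)) x‖ < ε := by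
    refine unif_of_local hK (fun d x => ‖gradient v x - gradient (cyl e (f d)) x‖ < ε)
      fun x hx => ?_
    have h := (((cg.tendsto x).comp (lK x)).sub (t1 tendsto_fst (lK x) (lK2 x))).norm
    rw [sub_self, norm_zero] at h
    exact h.eventually_lt_const hε
  have E2 : ∀ᶠ d in atTop, ∀ q ∈ K ×ˢ K', ‖fderiv ℝ (gradient v) q.1 q.2
      - fderiv ℝ (gradient (cyl e (f d))) q.1 q.2‖ < ε := by
    refine unif_of_local (hK.prod hK') (fun d q => ‖fderiv ℝ (gradient v) q.1 q.2
      - fderiv ℝ (gradient (cyl e (f d))) q.1 q.2‖ < ε) fun q hq => ?_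
    have hl : Tendsto (fun p : ℕ × H × H => p.2)
        ((atTop : Filter ℕ) ×ˢ 𝓝[K ×ˢ K'] q) (𝓝 q) :=
      tendsto_nhds_of_tendsto_nhdsWithin (s := K ×ˢ K') tendsto_snd
    have hl2 : ∀ᶠ p in (atTop : Filter ℕ) ×ˢ 𝓝[K ×ˢ K'] q, p.2.1 ∈ K :=
      (tendsto_snd.eventually self_mem_nhdsWithin).mono fun p hp => hp.1
    have hq1 := (continuous_fst.tendsto q).comp hl
    have hq2 := (continuous_snd.tendsto q).comp hl
    have h := ((tendsto_clm_app ((ch.tendsto q.1).comp hq1) hq2).sub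
      (t2 tendsto_fst hq1 hl2 hq2)).norm
    rw [sub_self, norm_zero] at h
    exact h.eventually_lt_const hε
  have EL : ∀ η > 0, ∀ᶠ d in atTop, ∀ x ∈ K,
      |⟪L (gradient v x - gradient (cyl e (f d)) x), x⟫| < η := by
    intro η hη
    obtain ⟨R, hR⟩ := hK.isBounded.exists_norm_le
    have hlim : Tendsto (fun d => δ d * R) atTop (𝓝 0) := by simpa using hδ.mul_const R
    obtain ⟨D, hD⟩ := hcons (η / 2) (half_pos hη)
    filter_upwards [hlim.eventually_lt_const (half_pos hη), eventually_ge_atTop D]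
      with d hd hdD x hx
    have h1 := hD d hdD x hx
    have h2 : |⟪L (P d (gradient v (P d x)) - gradient (cyl e (f d)) x), x⟫| ≤ δ d * R :=
      (abs_real_inner_le_norm _ _).trans
        (mul_le_mul (eL d x hx) (hR x hx) (norm_nonneg _) (hδ0 d).le)
    have h3 : ⟪L (gradient v x - gradient (cyl e (f d)) x), x⟫
        = ⟪L (gradient v x - P d (gradient v (P d x))), x⟫
          + ⟪L (P d (gradient v (P d x)) - gradient (cyl e (f d)) x), x⟫ := by
      rw [← inner_add_left, ← map_add, sub_add_sub_cancel]
    rw [h3]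
    refine (abs_add_le _ _).trans_lt ?_
    linarith
  have EF : ∀ᶠ d in atTop, ∀ x ∈ K,
      |F x (v x) (gradient v x) (fderiv ℝ (gradient v) x)
        - F x (cyl e (f d) x) (gradient (cyl e (f d)) x)
          (fderiv ℝ (gradient (cyl e (f d))) x)| < ε / 2 := by
    refine unif_of_local hK (fun d x => |F x (v x) (gradient v x) (fderiv ℝ (gradient v) x)
        - F x (cyl e (f d) x) (gradient (cyl e (f d)) x)
          (fderiv ℝ (gradient (cyl e (f d))) x)| < ε / 2) fun x hx => ?_
    have c1 : Continuous fun x => F x (v x) (gradient v x) (fderiv ℝ (gradient v) x) :=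
      hFcont.comp (continuous_id.prodMk (cv.prodMk (cg.prodMk ch)))
    have c2 : Tendsto (fun p : ℕ × H => F p.2 (cyl e (f p.1) p.2) (gradient (cyl e (f p.1)) p.2)
          (fderiv ℝ (gradient (cyl e (f p.1))) p.2)) (atTop ×ˢ 𝓝[K] x)
          (𝓝 (F x (v x) (gradient v x) (fderiv ℝ (gradient v) x))) := by
      apply tendsto_of_seq_tendsto
      intro s hs
      have s2 := (lK x).comp hs
      exact hFseq _ _ _ _ _ _ _ _ s2 ((t0 tendsto_fst (lK x) (lK2 x)).comp hs)
        ((t1 tendsto_fst (lK x) (lK2 x)).comp hs)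
        fun h => (t2 tendsto_fst (lK x) (lK2 x) (tendsto_const_nhds (x := h))).comp hs
    have h := (((c1.tendsto x).comp (lK x)).sub c2).norm
    rw [sub_self, norm_zero] at h
    exact h.eventually_lt_const (half_pos hε)
  obtain ⟨d, h0, h1, h2, h3, h4, h5⟩ :=
    (E0.and (E1.and (E2.and ((EL ε hε).and ((EL (ε / 2) (half_pos hε)).and EF))))).exists
  refine ⟨d, f d, hfN d, h0, h1, fun x hx h hh => h2 (x, h) ⟨hx, hh⟩, h3, fun x hx => ?_⟩
  have a1 := h4 x hx
  have a2 := h5 x hx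
  have a3 := hPDE x
  rw [map_sub, inner_sub_left] at a1
  rw [abs_lt] at *
  constructor <;> linarith
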